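/- Let M be a locally connected topological space and ≪ a transitive binary relation on M whose graph is open in M × M and which is future-dense and past-dense. Let (P_k)_{k∈ℕ} be a decreasing sequence of past sets, i.e. I⁻(P_k) = P_k and P_{k+1} ⊆ P_k for all k, and set F_k := M \ closure(P_k). Then the sequence of topological boundaries (∂P_k) has a Hausdorff closed limit, and this limit equals ∂(⋃_k F_k). -/

import Mathlib

/-!
The sets `P k` are open and `closure (P k)` has its whole past inside `P k`, so a point `q` in the
future of a point of `frontier (P k)` lies outside `closure (P k)`, i.e. in `F k`. By future-density
every point of the upper limit is therefore in the closure of `⋃ k, F k`; it is not in the union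
itself, because `F k` is open and disjoint from `frontier (P j)` for `j ≥ k`. Conversely, a
connected neighbourhood of a point of `frontier (⋃ k, F k)` meets every `P k` and, for large `k`,
also `F k`, so it meets `frontier (P k)`. As the lower limit is contained in the upper limit, all
three sets agree.
-/

/-- The Hausdorff upper limit of a sequence of subsets. -/
def hausdorffUpperLimit {M : Type*} [TopologicalSpace M] (S : ℕ → Set M) : Set M :=
  {p | ∀ U ∈ nhds p, {k : ℕ | (U ∩ S k).Nonempty}.Infinite}

/-- The Hausdorff lower limit of a sequence of subsets. -/
def hausdorffLowerLimit {M : Type*} [TopologicalSpace M] (S : ℕ → Set M) : Set M :=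
  {p | ∀ U ∈ nhds p, {k : ℕ | ¬ (U ∩ S k).Nonempty}.Finite}

/-- The timelike past of a set `S`: all points related to some point of `S`. -/
def Iminus {M : Type*} (r : M → M → Prop) (S : Set M) : Set M :=
  {x | ∃ s ∈ S, r x s}

theorem isOpen_Iminus {M : Type*} [TopologicalSpace M] {r : M → M → Prop}
    (hopen : IsOpen {p : M × M | r p.1 p.2}) (S : Set M) : IsOpen (Iminus r S) := by
  have h : Iminus r S = ⋃ s ∈ S, {x | r x s} := by
    ext x
    simp [Iminus]
  rw [h]
  exact isOpen_biUnion fun s _ => hopen.preimage (f := fun x => (x, s)) (by fun_prop)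

theorem mem_Iminus_of_mem_closure {M : Type*} [TopologicalSpace M] {r : M → M → Prop}
    (hopen : IsOpen {p : M × M | r p.1 p.2}) {S : Set M} {x y : M} (hxy : r x y)
    (hy : y ∈ closure S) : x ∈ Iminus r S := by
  have ho : IsOpen {z | r x z} := hopen.preimage (f := fun z => (x, z)) (by fun_prop)
  obtain ⟨s, hs, hsS⟩ := mem_closure_iff.1 hy _ ho hxy
  exact ⟨s, hsS, hs⟩

theorem hausdorffLowerLimit_subset_upperLimit {M : Type*} [TopologicalSpace M]
    (S : ℕ → Set M) : hausdorffLowerLimit S ⊆ hausdorffUpperLimit S := by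
  intro p hp U hU
  have h := (hp U hU).infinite_compl
  simpa [Set.compl_ofPred] using h

theorem hausdorffLimit_frontiers_of_decreasing_pasts {M : Type*} [TopologicalSpace M]
    [LocallyConnectedSpace M]
    (r : M → M → Prop)
    (htrans : Transitive r)
    (hopen : IsOpen {p : M × M | r p.1 p.2})
    (hfd : ∀ x : M, x ∈ closure {y | r x y})
    (hpd : ∀ x : M, x ∈ closure {y | r y x})
    (P : ℕ → Set M) (hP : ∀ k, Iminus r (P k) = P k)
    (hmono : ∀ k, P (k + 1) ⊆ P k)
    (F : ℕ → Set M) (hF : ∀ k, F k = (closure (P k))ᶜ) :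
    hausdorffUpperLimit (fun k => frontier (P k)) = frontier (⋃ k, F k) ∧
    hausdorffLowerLimit (fun k => frontier (P k)) = frontier (⋃ k, F k) := by
  have hanti : Antitone P := antitone_nat_of_succ_le hmono
  have hPo : ∀ k, IsOpen (P k) := fun k => hP k ▸ isOpen_Iminus hopen (P k)
  have hupper : hausdorffUpperLimit (fun k => frontier (P k)) ⊆ frontier (⋃ k, F k) := by
    intro p hp
    refine ⟨?_, fun hi => ?_⟩
    · refine mem_closure_iff.2 fun U hU hpU => ?_
      obtain ⟨q, hqU, hpq⟩ := mem_closure_iff.1 (hfd p) U hU hpU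
      have ho : IsOpen {z | r z q} := hopen.preimage (f := fun z => (z, q)) (by fun_prop)
      obtain ⟨k, x, hxq, hx⟩ := (hp _ (ho.mem_nhds hpq)).nonempty
      refine ⟨q, hqU, Set.mem_iUnion.2 ⟨k, ?_⟩⟩
      rw [hF k]
      intro hq
      -- `x` would lie in the open set `P k`, which is disjoint from its frontier
      have hxP : x ∈ P k := hP k ▸ mem_Iminus_of_mem_closure hopen hxq hq
      exact hx.2 ((hPo k).interior_eq.symm ▸ hxP)
    · obtain ⟨k, hk⟩ := Set.mem_iUnion.1 (interior_subset hi)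
      have hFo : IsOpen (F k) := hF k ▸ isClosed_closure.isOpen_compl
      obtain ⟨j, ⟨x, hxF, hx⟩, hj⟩ := (hp _ (hFo.mem_nhds hk)).exists_gt k
      rw [hF k] at hxF
      exact hxF (closure_mono (hanti hj.le) hx.1)
  have hlower : frontier (⋃ k, F k) ⊆ hausdorffLowerLimit (fun k => frontier (P k)) := by
    intro p hp U hU
    obtain ⟨V, hVU, hVo, hpV, hVc⟩ :=
      locallyConnectedSpace_iff_subsets_isOpen_isConnected.1 ‹_› p U hU
    obtain ⟨y, hyV, hy⟩ := mem_closure_iff.1 hp.1 V hVo hpV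
    obtain ⟨n, hn⟩ := Set.mem_iUnion.1 hy
    rw [hF n] at hn
    have hFo : IsOpen (⋃ k, F k) :=
      isOpen_iUnion fun k => hF k ▸ isClosed_closure.isOpen_compl
    have hpF : p ∉ ⋃ k, F k := fun h => hp.2 (hFo.interior_eq.symm ▸ h)
    refine (Set.finite_lt_nat n).subset fun k hk => ?_
    by_contra hkn
    have hnk : n ≤ k := not_lt.1 hkn
    have hpk : p ∈ closure (P k) := by
      by_contra h
      exact hpF (Set.mem_iUnion.2 ⟨k, by rw [hF k]; exact h⟩)
    have hmeets : (V ∩ P k).Nonempty := mem_closure_iff.1 hpk V hVo hpV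
    have hmeets' : (V ∩ (closure (P k))ᶜ).Nonempty :=
      ⟨y, hyV, fun h => hn (closure_mono (hanti hnk) h)⟩
    -- otherwise the disjoint open sets `P k` and `(closure (P k))ᶜ` would disconnect `V`
    have hcover : V ⊆ P k ∪ (closure (P k))ᶜ := by
      intro z hz
      by_contra h
      simp only [Set.mem_union, Set.mem_compl_iff, not_or, not_not] at h
      exact hk ⟨z, hVU hz, h.2, fun hi => h.1 (interior_subset hi)⟩
    obtain ⟨z, -, hzP, hzF⟩ := hVc.isPreconnected _ _ (hPo k)
      isClosed_closure.isOpen_compl hcover hmeets hmeets'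
    exact hzF (subset_closure hzP)
  have hsub := hausdorffLowerLimit_subset_upperLimit (fun k => frontier (P k))
  exact ⟨hupper.antisymm (hlower.trans hsub), (hsub.trans hupper).antisymm hlower⟩
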